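/- arXiv:1512.09174 — 2 statements merged into one kernel-verified Lean document; each statement's English description precedes it below -/
import Mathlib

section
/- Given reals a, c, δ, γ > 0 satisfying (i) c < min(a, δ), (ii) γ ≥ 4a and γ > δ, (iii) δ + (c/δ)·γ ≤ a, suppose f is continuously differentiable, satisfies (H) and (H''), is constant on [ρ, ∞) for some ρ > 0, and satisfies (1/γ)·∫₀^a |f(s)| ds < a - c. Then the equation x'(t) = f(x(t-1)) has a Kaplan–Yorke solution x with max_{t∈ℝ} x(t) > 2a - c. If moreover f'(0) > -π/2, then the equation also has a Kaplan–Yorke solution y with max_{t∈ℝ} y(t) < 2a - c. -/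
/-!
A solution with `x (t) = -x (t - 2)` paired with `y (t) = x (t - 1)` solves the planar Hamiltonian
system `x' = f y`, `y' = -f x`, so Kaplan–Yorke solutions correspond to closed orbits of period
`4` of this system. Let `e` be the primitive of `|f|` vanishing at `0`. In the closed first
quadrant the energy is `e x + e y`, and the orbit of energy `E` runs from `(m, 0)`, `e m = E`, to
the diagonal point `(b, b)`, `e b = E / 2`, in time
`eighthTime f e E = ∫₀ᵇ dy / |f x|`, where `e x = E - e y`.

This integral is nonsingular and depends continuously on `E > 0` (`eighthTime_continuous`). If it
equals `1 / 2`, the symmetries of the system (reflection in the diagonal with time reversal, and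
rotation by a right angle) together with uniqueness of solutions produce a Kaplan–Yorke solution
with maximum `m` (`exists_isKY`).

It remains to apply the intermediate value theorem. For `m = 2a - c` the integral condition gives
`b > a`, so `|f x| = γ` on the whole arc and the time is `b / γ < 1 / 2`. For large `E` the arc
lies where `f` is constant and the time `b / |f ρ|` is at least `1 / 2`; this gives a solution
with maximum above `2a - c`. If `f'(0) > -π/2`, the polar angle of small orbits grows at a rate
below `π / 2`, so the time needed to reach angle `π / 4` is at least `1 / 2`
(`eighthTime_lower`); this gives a solution with maximum below `2a - c`.
-/

open Set Filter

/-- Hypotheses (H): `f` is continuous, satisfies the negative feedback condition,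
and is differentiable on a neighborhood of `0` with `f'(0) < 0`. -/
def HypH (f : ℝ → ℝ) : Prop :=
  Continuous f ∧ (∀ x : ℝ, x ≠ 0 → x * f x < 0) ∧
    (∀ᶠ y in nhds (0 : ℝ), DifferentiableAt ℝ f y) ∧ deriv f 0 < 0

/-- A solution on `[-1,∞)` of the delay equation `x'(t) = f (x (t-1))`. -/
def IsSolOn (f x : ℝ → ℝ) : Prop :=
  ContinuousOn x (Ici (-1)) ∧ ∀ t : ℝ, 0 < t → HasDerivAt x (f (x (t - 1))) t

/-- Membership in the set `K`: `φ(-1) = 0`, `φ` nondecreasing on `[-1,0]`,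
continuous there, and `|φ| ≤ M`. -/
def MemK (M : ℝ) (φ : ℝ → ℝ) : Prop :=
  ContinuousOn φ (Icc (-1) 0) ∧ φ (-1) = 0 ∧ MonotoneOn φ (Icc (-1) 0) ∧
    ∀ s ∈ Icc (-1 : ℝ) 0, |φ s| ≤ M

/-- `T` is the minimal (positive) period of `p`. -/
def MinPeriod {α : Type*} (p : ℝ → α) (T : ℝ) : Prop :=
  0 < T ∧ (∀ t, p (t + T) = p t) ∧
    ∀ T' : ℝ, 0 < T' → (∀ t, p (t + T') = p t) → T ≤ T'

/-- A slowly oscillating periodic (SOP) solution of `x'(t) = f (x (t-1))`: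
a nonconstant periodic differentiable solution any two of whose distinct
zeros are separated by more than `1`. -/
def IsSOP (f p : ℝ → ℝ) : Prop :=
  (∀ t : ℝ, HasDerivAt p (f (p (t - 1))) t) ∧
    (∃ T : ℝ, 0 < T ∧ ∀ t, p (t + T) = p t) ∧
    (∃ t s : ℝ, p t ≠ p s) ∧
    ∀ z z' : ℝ, p z = 0 → p z' = 0 → z ≠ z' → 1 < |z - z'|

/-- A Kaplan–Yorke solution: an SOP solution of minimal period `4`
satisfying `x(t) = -x(t-2)`. -/
def IsKY (f x : ℝ → ℝ) : Prop :=
  IsSOP f x ∧ MinPeriod x 4 ∧ ∀ t : ℝ, x t = -x (t - 2)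

/-- Hypotheses (H') with constants `μ, β, σ`. -/
def HypH' (f : ℝ → ℝ) (μ β σ : ℝ) : Prop :=
  (∀ x : ℝ, |f x| ≤ μ) ∧ ∀ x : ℝ, β ≤ |x| → σ ≤ |f x|

/-- Hypotheses (H'') with constants `a, c, δ, γ`. -/
def HypH'' (f : ℝ → ℝ) (a c δ γ : ℝ) : Prop :=
  (∀ x : ℝ, f (-x) = -f x) ∧ (∀ x ∈ Icc (0 : ℝ) (2 * a), |f x| ≤ γ) ∧
    (∀ x ∈ Icc a (2 * a - c), f x = -γ) ∧ ∀ x ∈ Icc (2 * a) γ, f x = -δ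

/-- The minimal period of `p` equals `z'' - z` for three consecutive zeros
`z < z' < z''` of `p`. -/
def PeriodThreeZeros (p : ℝ → ℝ) : Prop :=
  ∃ z z' z'' : ℝ, z < z' ∧ z' < z'' ∧ p z = 0 ∧ p z' = 0 ∧ p z'' = 0 ∧
    (∀ t, t ∈ Ioo z z' ∪ Ioo z' z'' → p t ≠ 0) ∧ MinPeriod p (z'' - z)

open scoped NNReal

/-! ### Global solutions of the planar system -/

/-- A bounded globally Lipschitz autonomous vector field has a solution defined for all times.
Since the field is bounded, Picard–Lindelöf applies on every interval `[-(n+1), n+1]`, and the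
resulting solutions agree by uniqueness. -/
lemma exists_global_solution {E : Type*} [NormedAddCommGroup E] [NormedSpace ℝ E]
    [CompleteSpace E] (v : E → E) (K L : ℝ≥0) (hK : LipschitzWith K v) (hL : ∀ x, ‖v x‖ ≤ L)
    (x₀ : E) : ∃ α : ℝ → E, α 0 = x₀ ∧ ∀ t, HasDerivAt α (v (α t)) t := by
  have key : ∀ n : ℕ, ∃ α : ℝ → E, α 0 = x₀ ∧
      ∀ t ∈ Ioo (-((n : ℝ) + 1)) (n + 1), HasDerivAt α (v (α t)) t := by
    intro n
    have h0 : (0 : ℝ) ∈ Icc (-((n : ℝ) + 1)) (n + 1) :=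
      ⟨by linarith [n.cast_nonneg (α := ℝ)], by linarith [n.cast_nonneg (α := ℝ)]⟩
    have hpl : IsPicardLindelof (fun _ => v) (⟨0, h0⟩ : Icc (-((n : ℝ) + 1)) (n + 1)) x₀
        (L * (n + 1)) 0 L K :=
      { lipschitzOnWith := fun _ _ => hK.lipschitzOnWith
        continuousOn := fun _ _ => continuousOn_const
        norm_le := fun _ _ x _ => hL x
        mul_max_le := by simp }
    obtain ⟨α, hα, hd⟩ := hpl.exists_eq_forall_mem_Icc_hasDerivWithinAt₀
    exact ⟨α, hα, fun t ht => (hd t (Ioo_subset_Icc_self ht)).hasDerivAt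
      (Icc_mem_nhds ht.1 ht.2)⟩
  choose A hA0 hAd using key
  have agree : ∀ (n k : ℕ) (s : ℝ), |s| < n + 1 → |s| < k + 1 → A n s = A k s := by
    intro n k s hn hk
    have hs : |s| < min ((n : ℝ) + 1) (k + 1) := lt_min hn hk
    have hpos : 0 < min ((n : ℝ) + 1) (k + 1) := lt_of_le_of_lt (abs_nonneg s) hs
    have hmin1 := min_le_left ((n : ℝ) + 1) (k + 1)
    have hmin2 := min_le_right ((n : ℝ) + 1) (k + 1)
    refine ODE_solution_unique_of_mem_Ioo (v := fun _ => v) (s := fun _ => univ) (K := K)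
      (t₀ := 0) (a := -min ((n : ℝ) + 1) (k + 1)) (b := min ((n : ℝ) + 1) (k + 1))
      (fun _ _ => hK.lipschitzOnWith) ⟨by linarith, hpos⟩
      (fun t ht => ⟨hAd n t ⟨by linarith [ht.1], by linarith [ht.2]⟩, trivial⟩)
      (fun t ht => ⟨hAd k t ⟨by linarith [ht.1], by linarith [ht.2]⟩, trivial⟩)
      ((hA0 n).trans (hA0 k).symm) (abs_lt.1 hs)
  refine ⟨fun t => A ⌈|t|⌉₊ t, hA0 _, fun t => ?_⟩
  have hbd : ∀ s : ℝ, |s| < (⌈|s|⌉₊ : ℝ) + 1 := fun s => by linarith [Nat.le_ceil |s|]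
  have ht := hAd _ t (abs_lt.1 (hbd t))
  refine ht.congr_of_eventuallyEq ?_
  filter_upwards [(isOpen_lt continuous_abs continuous_const).mem_nhds (hbd t)] with s hs
  exact agree _ _ s (hbd s) hs

/-- The pair `(x, y)` satisfies `x' = f y`, `y' = -f x` at time `t`. -/
def PlanarAt (f x y : ℝ → ℝ) (t : ℝ) : Prop :=
  HasDerivAt x (f (y t)) t ∧ HasDerivAt y (-f (x t)) t

/-- The vector field of the planar system `x' = f y`, `y' = -f x`. -/
def planarField (f : ℝ → ℝ) (p : ℝ × ℝ) : ℝ × ℝ := (f p.2, -f p.1)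

lemma planarField_lipschitz {f : ℝ → ℝ} {K : ℝ≥0} (hK : LipschitzWith K f) :
    LipschitzWith K (planarField f) := by
  refine LipschitzWith.of_dist_le_mul fun p q => ?_
  have h1 := hK.dist_le_mul p.1 q.1
  have h2 := hK.dist_le_mul p.2 q.2
  simp only [planarField, Prod.dist_eq, dist_neg_neg]
  refine max_le (h2.trans ?_) (h1.trans ?_)
  · gcongr; exact le_max_right _ _
  · gcongr; exact le_max_left _ _

lemma PlanarAt.hasDerivAt {f x y : ℝ → ℝ} {t : ℝ} (h : PlanarAt f x y t) :
    HasDerivAt (fun s => (x s, y s)) (planarField f (x t, y t)) t :=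
  h.1.prodMk h.2

lemma planar_exists {f : ℝ → ℝ} {K L : ℝ≥0} (hK : LipschitzWith K f) (hL : ∀ x, |f x| ≤ L)
    (x₀ y₀ : ℝ) : ∃ x y : ℝ → ℝ, x 0 = x₀ ∧ y 0 = y₀ ∧ ∀ t, PlanarAt f x y t := by
  obtain ⟨α, hα, hd⟩ := exists_global_solution (planarField f) K L (planarField_lipschitz hK)
    (fun p => by simpa [planarField, Prod.norm_def] using ⟨hL p.2, hL p.1⟩) (x₀, y₀)
  refine ⟨fun t => (α t).1, fun t => (α t).2, by simp [hα], by simp [hα], fun t => ⟨?_, ?_⟩⟩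
  · exact (hd t).fst
  · exact (hd t).snd

lemma planar_unique {f : ℝ → ℝ} {K : ℝ≥0} (hK : LipschitzWith K f) {x y x' y' : ℝ → ℝ}
    (h : ∀ t, PlanarAt f x y t) (h' : ∀ t, PlanarAt f x' y' t) (t₀ : ℝ)
    (hx : x t₀ = x' t₀) (hy : y t₀ = y' t₀) (t : ℝ) : x t = x' t ∧ y t = y' t := by
  have := ODE_solution_unique_univ (v := fun _ => planarField f) (s := fun _ => univ) (t₀ := t₀)
    (fun _ => (planarField_lipschitz hK).lipschitzOnWith)
    (fun t => ⟨(h t).hasDerivAt, trivial⟩) (fun t => ⟨(h' t).hasDerivAt, trivial⟩)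
    (by simp [hx, hy])
  simpa using congrFun this t

lemma planar_unique_Icc {f : ℝ → ℝ} {K : ℝ≥0} (hK : LipschitzWith K f) {x y x' y' : ℝ → ℝ}
    {T : ℝ} (h : ∀ t, PlanarAt f x y t) (h' : ∀ t ∈ Icc 0 T, PlanarAt f x' y' t)
    (hx : x 0 = x' 0) (hy : y 0 = y' 0) (t : ℝ) (ht : t ∈ Icc 0 T) :
    x t = x' t ∧ y t = y' t := by
  have := ODE_solution_unique (v := fun _ => planarField f) (a := 0) (b := T)
    (fun _ => planarField_lipschitz hK)
    (fun t _ => (h t).hasDerivAt.continuousAt.continuousWithinAt)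
    (fun t _ => (h t).hasDerivAt.hasDerivWithinAt)
    (fun t ht => (h' t ht).hasDerivAt.continuousAt.continuousWithinAt)
    (fun t ht => (h' t (Ico_subset_Icc_self ht)).hasDerivAt.hasDerivWithinAt)
    (by simp [hx, hy])
  simpa using this ht

/-! ### From the delay equation to Kaplan–Yorke solutions -/

/-- The zeros of an antiperiodic function that is positive on `(-1, 1)` and vanishes at `1` are
the odd integers, which gives both slow oscillation and the minimal period. -/
lemma isKY_of_antiperiodic {f x : ℝ → ℝ} (hd : ∀ t, HasDerivAt x (f (x (t - 1))) t)
    (hanti : ∀ t, x t = -x (t - 2)) (hpos : ∀ t ∈ Ioo (-1 : ℝ) 1, 0 < x t) (h1 : x 1 = 0) :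
    IsKY f x := by
  have hper4 : ∀ t, x (t + 4) = x t := fun t => by
    have e1 := hanti (t + 4)
    have e2 := hanti (t + 2)
    rw [show t + 4 - 2 = t + 2 by ring] at e1
    rw [show t + 2 - 2 = t by ring] at e2
    rw [e1, e2, neg_neg]
  have habs : Function.Periodic (fun t => |x t|) 2 := fun t => by
    change |x (t + 2)| = |x t|
    rw [hanti (t + 2), abs_neg, show t + 2 - 2 = t by ring]
  have hzero : ∀ t, x t = 0 → ∃ n : ℤ, t = 2 * n + 1 := by
    intro t ht
    have hn1 := Int.floor_le ((t + 1) / 2)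
    have hn2 := Int.lt_floor_add_one ((t + 1) / 2)
    set n := ⌊(t + 1) / 2⌋ with hn
    have hz : |x (t - n * 2)| = |x t| := habs.sub_int_mul_eq n
    rw [ht, abs_zero, abs_eq_zero] at hz
    by_cases h : t - n * 2 = -1
    · exact ⟨n - 1, by push_cast; linarith⟩
    · exfalso
      have h' : -1 < t - n * 2 := lt_of_le_of_ne (by linarith) (Ne.symm h)
      linarith [hpos (t - n * 2) ⟨h', by linarith⟩]
  have h0 : 0 < x 0 := hpos 0 (by norm_num)
  have h2 : x 2 = -x 0 := by have := hanti 2; norm_num at this; exact this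
  refine ⟨⟨hd, ⟨4, by norm_num, hper4⟩, ⟨0, 1, by rw [h1]; exact h0.ne'⟩, ?_⟩,
    ⟨by norm_num, hper4, ?_⟩, hanti⟩
  · intro z z' hz hz' hne
    obtain ⟨n, rfl⟩ := hzero z hz
    obtain ⟨k, rfl⟩ := hzero z' hz'
    have hnk : n - k ≠ 0 := fun h => hne (by rw [sub_eq_zero.1 h])
    have : (1 : ℝ) ≤ |(n : ℝ) - k| := by exact_mod_cast Int.one_le_abs hnk
    rw [show (2 * (n : ℝ) + 1) - (2 * k + 1) = 2 * (n - k) by ring, abs_mul, abs_two]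
    linarith
  · intro T hT hTper
    by_contra hlt
    push Not at hlt
    obtain ⟨n, hn⟩ := hzero (1 + T) (by rw [hTper 1, h1])
    have hT2 : T = 2 * n := by linarith
    have hn0 : 0 < n := by
      have : (0 : ℝ) < n := by linarith
      exact_mod_cast this
    have hn2 : n < 2 := by
      have : (n : ℝ) < 2 := by linarith
      exact_mod_cast this
    obtain rfl : n = 1 := by omega
    have := hTper 0
    rw [zero_add, hT2] at this
    norm_num at this
    linarith

/-! ### Primitives of nonnegative functions as order isomorphisms -/

/-- A primitive of a nonnegative function which is positive off `0` and bounded away from `0`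
near `±∞` is an increasing bijection of the real line. -/
lemma exists_primitive_orderIso {q : ℝ → ℝ} (hq : Continuous q) (hpos : ∀ s, s ≠ 0 → 0 < q s)
    {κ R : ℝ} (hκ : 0 < κ) (hlow : ∀ s, R < |s| → κ ≤ q s) :
    ∃ e : ℝ ≃o ℝ, ∀ x, e x = ∫ s in (0 : ℝ)..x, q s := by
  set Φ : ℝ → ℝ := fun x => ∫ s in (0 : ℝ)..x, q s with hΦ
  have hd : ∀ x, HasDerivAt Φ (q x) x := fun x => hq.integral_hasStrictDerivAt 0 x |>.hasDerivAt
  have hdiff : Differentiable ℝ Φ := fun x => (hd x).differentiableAt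
  have hderiv : ∀ x, deriv Φ x = q x := fun x => (hd x).deriv
  have hnn : ∀ s, 0 ≤ q s := by
    have hc : IsClosed {s | 0 ≤ q s} := isClosed_le continuous_const hq
    have hsub : ({0}ᶜ : Set ℝ) ⊆ {s | 0 ≤ q s} := fun s hs => (hpos s hs).le
    intro s
    have := hc.closure_subset_iff.2 hsub
    rw [(dense_compl_singleton (0 : ℝ)).closure_eq] at this
    exact this (mem_univ s)
  have hmono : StrictMono Φ := by
    intro x y hxy
    have hsub : Φ y - Φ x = ∫ s in x..y, q s :=
      intervalIntegral.integral_interval_sub_left (hq.intervalIntegrable _ _)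
        (hq.intervalIntegrable _ _)
    have : 0 < ∫ s in x..y, q s := by
      refine intervalIntegral.integral_pos hxy hq.continuousOn (fun s _ => hnn s) ?_
      by_cases hx : x = 0
      · exact ⟨y, ⟨hxy.le, le_rfl⟩, hpos y (by rintro rfl; exact hxy.ne hx)⟩
      · exact ⟨x, ⟨le_rfl, hxy.le⟩, hpos x hx⟩
    linarith
  have hright : ∀ x, R ≤ x → κ * (x - R) ≤ Φ x - Φ R := fun x hx =>
    (convex_Ici R).mul_sub_le_image_sub_of_le_deriv hdiff.continuous.continuousOn
      hdiff.differentiableOn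
      (fun s hs => by
        rw [interior_Ici] at hs
        rw [hderiv]
        exact hlow s (lt_of_lt_of_le hs (le_abs_self s)))
      R self_mem_Ici x hx hx
  have hleft : ∀ x, x ≤ -R → κ * (-R - x) ≤ Φ (-R) - Φ x := fun x hx =>
    (convex_Iic (-R)).mul_sub_le_image_sub_of_le_deriv hdiff.continuous.continuousOn
      hdiff.differentiableOn
      (fun s hs => by
        rw [interior_Iic] at hs
        rw [hderiv]
        have : s < -R := hs
        exact hlow s (lt_of_lt_of_le (by linarith) (neg_le_abs s)))
      x hx (-R) self_mem_Iic hx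
  have hsurj : Function.Surjective Φ := by
    intro y
    refine mem_range_of_exists_le_of_exists_ge hdiff.continuous ?_ ?_
    · refine ⟨-R - |Φ (-R) - y| / κ, ?_⟩
      have hdiv : 0 ≤ |Φ (-R) - y| / κ := by positivity
      have := hleft (-R - |Φ (-R) - y| / κ) (by linarith)
      rw [show κ * (-R - (-R - |Φ (-R) - y| / κ)) = |Φ (-R) - y| by field_simp; ring] at this
      linarith [le_abs_self (Φ (-R) - y)]
    · refine ⟨R + |y - Φ R| / κ, ?_⟩
      have hdiv : 0 ≤ |y - Φ R| / κ := by positivity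
      have := hright (R + |y - Φ R| / κ) (by linarith)
      rw [show κ * (R + |y - Φ R| / κ - R) = |y - Φ R| by field_simp; ring] at this
      linarith [le_abs_self (y - Φ R)]
  exact ⟨hmono.orderIsoOfSurjective Φ hsurj, fun x => rfl⟩

lemma hasDerivAt_primitive {q : ℝ → ℝ} (hq : Continuous q) {e : ℝ ≃o ℝ}
    (he : ∀ x, e x = ∫ s in (0 : ℝ)..x, q s) (x : ℝ) : HasDerivAt e (q x) x := by
  rw [show (e : ℝ → ℝ) = fun x => ∫ s in (0 : ℝ)..x, q s from funext he]
  exact (hq.integral_hasStrictDerivAt 0 x).hasDerivAt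

lemma hasDerivAt_primitive_symm {q : ℝ → ℝ} (hq : Continuous q) {e : ℝ ≃o ℝ}
    (he : ∀ x, e x = ∫ s in (0 : ℝ)..x, q s) (w : ℝ) (hw : q (e.symm w) ≠ 0) :
    HasDerivAt e.symm (q (e.symm w))⁻¹ w :=
  (hasDerivAt_primitive hq he _).of_local_left_inverse e.symm.continuous.continuousAt hw
    (Eventually.of_forall fun y => e.apply_symm_apply y)

/-! ### The orbit through an eighth of its period -/

lemma f_neg_of_pos {f : ℝ → ℝ} (hneg : ∀ x : ℝ, x ≠ 0 → x * f x < 0) {x : ℝ} (hx : 0 < x) :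
    f x < 0 := by
  by_contra h
  push Not at h
  nlinarith [hneg x hx.ne', mul_nonneg hx.le h]

lemma f_ne_zero {f : ℝ → ℝ} (hneg : ∀ x : ℝ, x ≠ 0 → x * f x < 0) {x : ℝ} (hx : x ≠ 0) :
    f x ≠ 0 := fun h => by
  have := hneg x hx
  rw [h, mul_zero] at this
  exact lt_irrefl _ this

/-- The speed `|f x|` of `y` along the level `E` of the energy `e x + e y`, as a function of
`y = s`, where `e` is the primitive of `|f|`. The truncation `max · (E / 2)` is inactive on the
relevant range `0 ≤ y ≤ x` and keeps the expression positive for all `s`. -/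
noncomputable def speed (f : ℝ → ℝ) (e : ℝ ≃o ℝ) (E s : ℝ) : ℝ :=
  |f (e.symm (max (E - e s) (E / 2)))|

/-- The time the orbit of energy `E` of `x' = f y`, `y' = -f x` takes from the positive `x`-axis
to the diagonal, that is, an eighth of its period. -/
noncomputable def eighthTime (f : ℝ → ℝ) (e : ℝ ≃o ℝ) (E : ℝ) : ℝ :=
  ∫ s in (0 : ℝ)..e.symm (E / 2), (speed f e E s)⁻¹

section
variable {f : ℝ → ℝ} {e : ℝ ≃o ℝ}

lemma primitive_zero (he : ∀ x, e x = ∫ s in (0 : ℝ)..x, |f s|) : e 0 = 0 := by simp [he]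

lemma primitive_symm_zero (he : ∀ x, e x = ∫ s in (0 : ℝ)..x, |f s|) : e.symm 0 = 0 := by
  rw [e.symm_apply_eq, primitive_zero he]

lemma primitive_symm_pos (he : ∀ x, e x = ∫ s in (0 : ℝ)..x, |f s|) {w : ℝ} (hw : 0 < w) :
    0 < e.symm w := by
  rw [← primitive_symm_zero he]
  exact e.symm.strictMono hw

lemma speed_pos (hneg : ∀ x : ℝ, x ≠ 0 → x * f x < 0)
    (he : ∀ x, e x = ∫ s in (0 : ℝ)..x, |f s|) {E : ℝ} (hE : 0 < E) (s : ℝ) :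
    0 < speed f e E s :=
  abs_pos.2 (f_ne_zero hneg (primitive_symm_pos he (lt_max_of_lt_right (half_pos hE))).ne')

lemma speed_of_le {E s : ℝ} (hs : s ≤ e.symm (E / 2)) :
    speed f e E s = |f (e.symm (E - e s))| := by
  have : e s ≤ E / 2 := (e.le_symm_apply).1 hs
  rw [speed, max_eq_left (by linarith)]

lemma speed_continuous (hcont : Continuous f) (E : ℝ) : Continuous (speed f e E) := by
  have h1 := e.continuous
  have h2 := e.symm.continuous
  unfold speed
  fun_prop

/-- The energy is parametrised as `exp u` to stay in the range where the time is continuous. -/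
lemma eighthTime_continuous (hcont : Continuous f) (hneg : ∀ x : ℝ, x ≠ 0 → x * f x < 0)
    (he : ∀ x, e x = ∫ s in (0 : ℝ)..x, |f s|) :
    Continuous fun u : ℝ => eighthTime f e (Real.exp u) := by
  have h1 := e.continuous
  have h2 := e.symm.continuous
  unfold eighthTime
  refine intervalIntegral.continuous_parametric_intervalIntegral_of_continuous
    (f := fun u s => (speed f e (Real.exp u) s)⁻¹) ?_ (by fun_prop)
  refine Continuous.inv₀ ?_ fun p => (speed_pos hneg he (Real.exp_pos _) _).ne'
  unfold speed
  fun_prop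

/-- Intermediate value theorem for the time, between two positive energies. -/
lemma exists_eighthTime_eq (hcont : Continuous f) (hneg : ∀ x : ℝ, x ≠ 0 → x * f x < 0)
    (he : ∀ x, e x = ∫ s in (0 : ℝ)..x, |f s|) {E₀ E₁ τ : ℝ} (h0 : 0 < E₀) (h1 : 0 < E₁)
    (hτ0 : eighthTime f e E₀ < τ) (hτ1 : τ ≤ eighthTime f e E₁) :
    ∃ E, 0 < E ∧ eighthTime f e E = τ ∧ (E₀ < E₁ → E₀ < E) ∧ (E₁ < E₀ → E < E₀) := by
  have hc := eighthTime_continuous hcont hneg he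
  have hmem : τ ∈ uIcc (eighthTime f e (Real.exp (Real.log E₀)))
      (eighthTime f e (Real.exp (Real.log E₁))) := by
    rw [Real.exp_log h0, Real.exp_log h1]
    exact Icc_subset_uIcc ⟨hτ0.le, hτ1⟩
  obtain ⟨u, hu, hut⟩ := intermediate_value_uIcc hc.continuousOn hmem
  have hne : Real.exp u ≠ E₀ := by
    rintro h
    rw [← h] at hτ0
    exact hτ0.ne hut
  refine ⟨Real.exp u, Real.exp_pos u, hut, fun h => ?_, fun h => ?_⟩
  · have hl := Real.log_lt_log h0 h
    rw [uIcc_of_le hl.le] at hu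
    exact lt_of_le_of_ne ((Real.log_le_iff_le_exp h0).1 hu.1) hne.symm
  · have hl := Real.log_lt_log h1 h
    rw [uIcc_of_ge hl.le] at hu
    exact lt_of_le_of_ne ((Real.le_log_iff_exp_le h0).1 hu.2) hne

/-- When `|f|` is constant on `[b, m]`, the range of `x` on the way to the diagonal, the time is
the height `b` divided by that constant speed. -/
lemma eighthTime_of_const {E κ : ℝ} (hb0 : 0 ≤ e.symm (E / 2))
    (he : ∀ x, e x = ∫ s in (0 : ℝ)..x, |f s|)
    (hk : ∀ x ∈ Icc (e.symm (E / 2)) (e.symm E), |f x| = κ) :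
    eighthTime f e E = e.symm (E / 2) / κ := by
  have hcongr : eighthTime f e E = ∫ s in (0 : ℝ)..e.symm (E / 2), κ⁻¹ := by
    refine intervalIntegral.integral_congr fun s hs => ?_
    rw [uIcc_of_le hb0] at hs
    have h1 : e s ≤ E / 2 := (e.le_symm_apply).1 hs.2
    have h2 : 0 ≤ e s := by rw [← primitive_zero he]; exact e.monotone hs.1
    change (speed f e E s)⁻¹ = κ⁻¹
    rw [speed_of_le hs.2, hk]
    exact ⟨e.symm.monotone (by linarith), e.symm.monotone (by linarith)⟩
  rw [hcongr]
  simp [div_eq_mul_inv]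

/-- If `|f s| ≤ k s` on `[0, m]`, the polar angle `arctan (y / x)` grows at rate at most `k`
along the orbit through `(m, 0)`, so reaching the diagonal takes time at least `π / (4 k)`. -/
lemma eighthTime_lower (hcont : Continuous f) (hneg : ∀ x : ℝ, x ≠ 0 → x * f x < 0)
    (he : ∀ x, e x = ∫ s in (0 : ℝ)..x, |f s|) {E k : ℝ} (hE : 0 < E)
    (hk : ∀ s ∈ Icc 0 (e.symm E), |f s| ≤ k * s) :
    Real.pi / 4 ≤ k * eighthTime f e E := by
  set b := e.symm (E / 2) with hb
  have hbpos : 0 < b := primitive_symm_pos he (half_pos hE)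
  have hspc : Continuous fun s => (speed f e E s)⁻¹ :=
    (speed_continuous hcont E).inv₀ fun s => (speed_pos hneg he hE s).ne'
  set G : ℝ → ℝ := fun y => ∫ s in (0 : ℝ)..y, (speed f e E s)⁻¹ with hG
  have hGd : ∀ y, HasDerivAt G (speed f e E y)⁻¹ y := fun y =>
    (hspc.integral_hasStrictDerivAt 0 y).hasDerivAt
  set X : ℝ → ℝ := fun s => e.symm (E - e s) with hX
  have hXpos : ∀ s ∈ Icc 0 b, 0 < X s := fun s hs => by
    have h1 : e s ≤ E / 2 := (e.le_symm_apply).1 hs.2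
    exact primitive_symm_pos he (by linarith)
  have hXle : ∀ s ∈ Icc 0 b, X s ≤ e.symm E := fun s hs => by
    have h2 : 0 ≤ e s := by rw [← primitive_zero he]; exact e.monotone hs.1
    exact e.symm.monotone (by linarith)
  have hXd : ∀ s ∈ Icc 0 b, HasDerivAt X (|f (X s)|⁻¹ * -|f s|) s := fun s hs =>
    (hasDerivAt_primitive_symm hcont.abs he (E - e s)
      (abs_pos.2 (f_ne_zero hneg (hXpos s hs).ne')).ne').comp s
      ((hasDerivAt_primitive hcont.abs he s).const_sub E)
  have hd : ∀ s ∈ Icc 0 b, HasDerivAt (fun s => k * G s - Real.arctan (s / X s))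
      (k * (speed f e E s)⁻¹ - 1 / (1 + (s / X s) ^ 2) *
        ((1 * X s - s * (|f (X s)|⁻¹ * -|f s|)) / X s ^ 2)) s := fun s hs =>
    ((hGd s).const_mul k).sub
      (((hasDerivAt_id s).div (hXd s hs) (hXpos s hs).ne').arctan)
  have hmono : MonotoneOn (fun s => k * G s - Real.arctan (s / X s)) (Icc 0 b) := by
    refine monotoneOn_of_deriv_nonneg (convex_Icc 0 b)
      (fun s hs => (hd s hs).continuousAt.continuousWithinAt)
      (fun s hs => (hd s (interior_subset hs)).differentiableAt.differentiableWithinAt)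
      fun s hs => ?_
    have hs' := interior_subset hs
    rw [(hd s hs').deriv, speed_of_le hs'.2]
    have hx := hXpos s hs'
    have hfx : 0 < |f (X s)| := abs_pos.2 (f_ne_zero hneg hx.ne')
    have k1 := hk (X s) ⟨hx.le, hXle s hs'⟩
    have hsm : s ≤ e.symm E := hs'.2.trans (e.symm.monotone (by linarith))
    have k2 := hk s ⟨hs'.1, hsm⟩
    change 0 ≤ k * |f (X s)|⁻¹ - _
    have : k * |f (X s)|⁻¹ - 1 / (1 + (s / X s) ^ 2) *
        ((1 * X s - s * (|f (X s)|⁻¹ * -|f s|)) / X s ^ 2) =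
        (X s * (k * X s - |f (X s)|) + s * (k * s - |f s|)) /
          (|f (X s)| * (X s ^ 2 + s ^ 2)) := by
      field_simp
      ring
    rw [this]
    have := mul_nonneg hx.le (sub_nonneg.2 k1)
    have := mul_nonneg hs'.1 (sub_nonneg.2 k2)
    positivity
  have hfin := hmono ⟨le_rfl, hbpos.le⟩ ⟨hbpos.le, le_rfl⟩ hbpos.le
  have hXb : X b = b := by
    simp only [hX, hb, OrderIso.apply_symm_apply]
    congr 1
    ring
  have hG0 : G 0 = 0 := by simp [hG]
  simp only [hXb, hG0, div_self hbpos.ne', Real.arctan_one, zero_div, Real.arctan_zero] at hfin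
  change Real.pi / 4 ≤ k * G b
  linarith

/-- The orbit of energy `E` starts at `(m, 0)` with `m = e.symm E`, reaches the diagonal at time
`eighthTime f e E`, and until then stays in the square `[0, m] × [0, m]`. The orbit is obtained by inverting the time as a function
of `y` and solving the energy equation for `x`. -/
lemma exists_eighth_orbit (hcont : Continuous f) (hneg : ∀ x : ℝ, x ≠ 0 → x * f x < 0)
    (he : ∀ x, e x = ∫ s in (0 : ℝ)..x, |f s|) {L : ℝ} (hL : ∀ x, |f x| ≤ L) {E : ℝ}
    (hE : 0 < E) :
    ∃ x y : ℝ → ℝ, x 0 = e.symm E ∧ y 0 = 0 ∧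
      x (eighthTime f e E) = y (eighthTime f e E) ∧
      (∀ t ∈ Icc 0 (eighthTime f e E), PlanarAt f x y t) ∧
      (∀ t ∈ Icc 0 (eighthTime f e E), 0 < x t ∧ x t ≤ e.symm E ∧ y t ≤ e.symm E) ∧
      ∀ t, 0 < t → 0 < y t := by
  have hsp := speed_pos hneg he hE
  have hspc : Continuous fun s => (speed f e E s)⁻¹ :=
    (speed_continuous hcont E).inv₀ fun s => (hsp s).ne'
  have hLpos : 0 < L := lt_of_lt_of_le (hsp 0) (hL _)
  obtain ⟨G, hG⟩ := exists_primitive_orderIso hspc (fun s _ => inv_pos.2 (hsp s))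
    (R := 0) (inv_pos.2 hLpos) (fun s _ => by
      have := hsp s
      have h' : speed f e E s ≤ L := hL _
      gcongr)
  set b := e.symm (E / 2) with hb
  have hG0 : G 0 = 0 := by simp [hG]
  have hGb : G b = eighthTime f e E := hG b
  have hY0 : G.symm 0 = 0 := by rw [G.symm_apply_eq, hG0]
  have hYd : ∀ t, HasDerivAt G.symm (speed f e E (G.symm t)) t := fun t => by
    simpa using hasDerivAt_primitive_symm hspc hG t (inv_pos.2 (hsp _)).ne'
  have hYr : ∀ t ∈ Icc 0 (eighthTime f e E), 0 ≤ G.symm t ∧ G.symm t ≤ b := fun t ht => by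
    refine ⟨by rw [← hY0]; exact G.symm.monotone ht.1, ?_⟩
    rw [G.symm_apply_le, hGb]
    exact ht.2
  have hr : ∀ t ∈ Icc 0 (eighthTime f e E), 0 ≤ e (G.symm t) ∧ e (G.symm t) ≤ E / 2 :=
    fun t ht => ⟨by rw [← primitive_zero he]; exact e.monotone (hYr t ht).1,
      (e.le_symm_apply).1 (hYr t ht).2⟩
  have hXpos : ∀ t ∈ Icc 0 (eighthTime f e E), 0 < e.symm (E - e (G.symm t)) := fun t ht =>
    primitive_symm_pos he (by linarith [hr t ht])
  refine ⟨fun t => e.symm (E - e (G.symm t)), G.symm, ?_, hY0, ?_, fun t ht => ⟨?_, ?_⟩,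
    fun t ht => ⟨hXpos t ht, e.symm.monotone (by linarith [hr t ht]), ?_⟩, fun t ht => ?_⟩
  · simp [hY0, primitive_zero he]
  · have : G.symm (eighthTime f e E) = b := by rw [G.symm_apply_eq, hGb]
    simp only [this]
    rw [hb, e.apply_symm_apply, sub_half]
  · have hfx : |f (e.symm (E - e (G.symm t)))| ≠ 0 :=
      (abs_pos.2 (f_ne_zero hneg (hXpos t ht).ne')).ne'
    have h := (hasDerivAt_primitive_symm hcont.abs he _ hfx).comp t
      (((hasDerivAt_primitive hcont.abs he _).comp t (hYd t)).const_sub E)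
    refine h.congr_deriv ?_
    rw [speed_of_le (hYr t ht).2]
    have hy : f (G.symm t) ≤ 0 := by
      rcases (hYr t ht).1.eq_or_lt with h0 | h0
      · have hf0 : f 0 ≤ 0 := by
          have hcl : IsClosed {x | f x ≤ 0} := isClosed_le hcont continuous_const
          have hsub : Ioi (0 : ℝ) ⊆ {x | f x ≤ 0} := fun x hx => (f_neg_of_pos hneg hx).le
          have := hcl.closure_subset_iff.2 hsub
          rw [closure_Ioi] at this
          exact this self_mem_Ici
        rw [← h0]
        exact hf0
      · exact (f_neg_of_pos hneg h0).le
    rw [abs_of_nonpos hy]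
    field_simp
  · refine (hYd t).congr_deriv ?_
    rw [speed_of_le (hYr t ht).2, abs_of_neg (f_neg_of_pos hneg (hXpos t ht))]
  · exact (hYr t ht).2.trans (e.symm.monotone (by linarith))
  · rw [← hY0]
    exact G.symm.strictMono ht

/-! ### Kaplan–Yorke solutions from orbits of period four -/

/-- An orbit of the planar system with eighth-period `1 / 2` yields a Kaplan–Yorke solution.
Reflection in the diagonal combined with time reversal continues it to the `y`-axis at time `1`;
then the rotation by a right angle identifies `y` with the unit delay of `x`. -/
lemma exists_isKY (hcont : Continuous f) (hneg : ∀ x : ℝ, x ≠ 0 → x * f x < 0)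
    (hodd : ∀ x, f (-x) = -f x) {K L : ℝ≥0} (hK : LipschitzWith K f) (hL : ∀ x, |f x| ≤ L)
    (he : ∀ x, e x = ∫ s in (0 : ℝ)..x, |f s|) {E : ℝ} (hE : 0 < E)
    (hT : eighthTime f e E = 1 / 2) :
    ∃ x : ℝ → ℝ, IsKY f x ∧ x 0 = e.symm E ∧ ∀ t, x t ≤ e.symm E := by
  obtain ⟨X, Y, hX0, hY0, hXY, hpl, hrange, hYpos⟩ := exists_eighth_orbit hcont hneg he hL hE
  rw [hT] at hXY hpl hrange
  obtain ⟨x, y, hx0, hy0, hxy⟩ := planar_exists hK hL (e.symm E) 0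
  have hloc := planar_unique_Icc hK hxy hpl (hx0.trans hX0.symm) (hy0.trans hY0.symm)
  have hhalf : x (1 / 2) = y (1 / 2) := by
    have := hloc (1 / 2) ⟨by norm_num, le_rfl⟩
    rw [this.1, this.2, hXY]
  -- `t ↦ (y (1 - t), x (1 - t))` is a solution meeting `(x, y)` at time `1 / 2`.
  have hrefl : ∀ t, x t = y (1 - t) ∧ y t = x (1 - t) := by
    refine planar_unique hK hxy (x' := fun t => y (1 - t)) (y' := fun t => x (1 - t))
      (fun t => ⟨?_, ?_⟩) (1 / 2) ?_ ?_
    · exact ((hxy (1 - t)).2.comp_const_sub 1 t).congr_deriv (by simp)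
    · exact (hxy (1 - t)).1.comp_const_sub 1 t
    · rw [hhalf]; norm_num
    · rw [← hhalf]; norm_num
  have hx1 : x 1 = 0 := by rw [(hrefl 1).1, sub_self, hy0]
  have hy1 : y 1 = e.symm E := by rw [(hrefl 1).2, sub_self, hx0]
  -- `t ↦ (-y (t - 1), x (t - 1))` is a solution meeting `(x, y)` at time `1`.
  have hrot : ∀ t, x t = -y (t - 1) ∧ y t = x (t - 1) := by
    refine planar_unique hK hxy (x' := fun t => -y (t - 1)) (y' := fun t => x (t - 1))
      (fun t => ⟨?_, ?_⟩) 1 ?_ ?_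
    · exact ((hxy (t - 1)).2.comp_sub_const t 1).neg.congr_deriv (by simp)
    · exact ((hxy (t - 1)).1.comp_sub_const t 1).congr_deriv (by rw [hodd, neg_neg])
    · rw [hx1, sub_self, hy0, neg_zero]
    · rw [hy1, sub_self, hx0]
  have hanti : ∀ t, x t = -x (t - 2) := fun t => by
    rw [(hrot t).1, (hrot (t - 1)).2]
    ring_nf
  have heven : ∀ t, x (-t) = x t := fun t => by
    have h1 := (hrot (1 - t)).2
    rw [(hrefl (1 - t)).2] at h1
    ring_nf at h1
    exact h1.symm
  have hbd01 : ∀ t, 0 ≤ t → t ≤ 1 → (t < 1 → 0 < x t) ∧ 0 ≤ x t ∧ x t ≤ e.symm E := by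
    intro t ht0 ht1
    rcases le_total t (1 / 2) with h | h
    · have hr := hrange t ⟨ht0, h⟩
      rw [(hloc t ⟨ht0, h⟩).1]
      exact ⟨fun _ => hr.1, hr.1.le, hr.2.1⟩
    · have hmem : 1 - t ∈ Icc (0 : ℝ) (1 / 2) := ⟨by linarith, by linarith⟩
      rw [(hrefl t).1, (hloc _ hmem).2]
      refine ⟨fun h1 => hYpos _ (by linarith), ?_, (hrange _ hmem).2.2⟩
      rcases ht1.eq_or_lt with h1 | h1
      · rw [h1, sub_self, hY0]
      · exact (hYpos _ (by linarith)).le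
  have hpos : ∀ t ∈ Ioo (-1 : ℝ) 1, 0 < x t := by
    intro t ht
    rcases le_total 0 t with h | h
    · exact (hbd01 t h ht.2.le).1 ht.2
    · rw [← heven]
      exact (hbd01 (-t) (by linarith) (by linarith [ht.1])).1 (by linarith [ht.1])
  refine ⟨x, isKY_of_antiperiodic (fun t => ?_) hanti hpos hx1, hx0, fun t => ?_⟩
  · rw [← (hrot t).2]
    exact (hxy t).1
  · have habs : Function.Periodic (fun t => |x t|) 2 := fun t => by
      change |x (t + 2)| = |x t|
      rw [hanti (t + 2), abs_neg, show t + 2 - 2 = t by ring]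
    have hn1 := Int.floor_le ((t + 1) / 2)
    have hn2 := Int.lt_floor_add_one ((t + 1) / 2)
    set n := ⌊(t + 1) / 2⌋ with hn
    have hz : |x (t - n * 2)| = |x t| := habs.sub_int_mul_eq n
    have hle : |x (t - n * 2)| ≤ e.symm E := by
      rcases le_total 0 (t - n * 2) with h | h
      · have := hbd01 (t - n * 2) h (by linarith)
        rw [abs_of_nonneg this.2.1]
        exact this.2.2
      · have := hbd01 (-(t - n * 2)) (by linarith) (by linarith)
        rw [heven] at this
        rw [abs_of_nonneg this.2.1]
        exact this.2.2
    linarith [le_abs_self (x t)]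

end

/-! ### Regularity of the nonlinearity -/

/-- A `C¹` odd function that is constant near `∞` is globally Lipschitz and bounded. -/
lemma lipschitz_bounded {f : ℝ → ℝ} (hf : ContDiff ℝ 1 f) (hodd : ∀ x, f (-x) = -f x) {ρ : ℝ}
    (hρ : ∀ x, ρ ≤ x → f x = f ρ) :
    ∃ K L : ℝ≥0, LipschitzWith K f ∧ ∀ x, |f x| ≤ L := by
  have hneg : ∀ x, x ≤ -ρ → f x = -f ρ := fun x hx => by
    have := hρ (-x) (by linarith)
    rw [hodd] at this
    linarith
  have hcd : Continuous (deriv f) := hf.continuous_deriv le_rfl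
  obtain ⟨C, hC⟩ := isCompact_Icc.exists_bound_of_continuousOn (s := Icc (-ρ) ρ) hcd.continuousOn
  obtain ⟨D, hD⟩ := isCompact_Icc.exists_bound_of_continuousOn (s := Icc (-ρ) ρ)
    hf.continuous.continuousOn
  refine ⟨Real.toNNReal C, Real.toNNReal (max D |f ρ|),
    lipschitzWith_of_nnnorm_deriv_le (hf.differentiable one_ne_zero) fun x => ?_, fun x => ?_⟩
  · rcases lt_or_ge ρ x with h | h
    · have : f =ᶠ[nhds x] fun _ => f ρ := by
        filter_upwards [Ioi_mem_nhds h] with s hs using hρ s (le_of_lt hs)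
      rw [this.deriv_eq]
      simp
    rcases lt_or_ge x (-ρ) with h' | h'
    · have : f =ᶠ[nhds x] fun _ => -f ρ := by
        filter_upwards [Iio_mem_nhds h'] with s hs using hneg s (le_of_lt hs)
      rw [this.deriv_eq]
      simp
    · rw [← norm_toNNReal]
      exact Real.toNNReal_le_toNNReal (hC x ⟨h', h⟩)
  · rw [Real.coe_toNNReal _ (le_max_of_le_right (abs_nonneg _))]
    rcases lt_or_ge ρ x with h | h
    · rw [hρ x h.le]
      exact le_max_right _ _
    rcases lt_or_ge x (-ρ) with h' | h'
    · rw [hneg x h'.le, abs_neg]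
      exact le_max_right _ _
    · exact (hD x ⟨h', h⟩).trans (le_max_left _ _)

theorem statement_17 (f : ℝ → ℝ) (a c δ γ : ℝ)
    (ha : 0 < a) (hc : 0 < c) (hδ : 0 < δ) (hγ : 0 < γ)
    (hi : c < min a δ) (hii : 4 * a ≤ γ ∧ δ < γ) (hiii : δ + (c / δ) * γ ≤ a)
    (hf : ContDiff ℝ 1 f) (hH : HypH f) (hH'' : HypH'' f a c δ γ)
    (hconst : ∃ ρ : ℝ, 0 < ρ ∧ ∀ x : ℝ, ρ ≤ x → f x = f ρ)
    (hintegral : (1 / γ) * ∫ s in (0 : ℝ)..a, |f s| < a - c) :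
    (∃ x : ℝ → ℝ, IsKY f x ∧ ∃ t : ℝ, 2 * a - c < x t) ∧
      (-(Real.pi / 2) < deriv f 0 →
        ∃ y : ℝ → ℝ, IsKY f y ∧ ∀ t : ℝ, y t < 2 * a - c) := by
  obtain ⟨hcont, hneg, -, hf'0⟩ := hH
  obtain ⟨hodd, -, hplateau, -⟩ := hH''
  obtain ⟨ρ, hρ, hρc⟩ := hconst
  have hca : c < a := lt_of_lt_of_le hi (min_le_left _ _)
  obtain ⟨K, L, hK, hL⟩ := lipschitz_bounded hf hodd hρc
  have hκ : 0 < |f ρ| := abs_pos.2 (f_ne_zero hneg hρ.ne')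
  obtain ⟨e, he⟩ := exists_primitive_orderIso hcont.abs
    (fun s hs => abs_pos.2 (f_ne_zero hneg hs)) (R := ρ) hκ (fun s hs => by
      rcases abs_cases s with ⟨h, -⟩ | ⟨h, -⟩
      · rw [h] at hs
        rw [hρc s hs.le]
      · rw [h] at hs
        rw [← abs_neg (f s), ← hodd, hρc (-s) hs.le])
  have hepos : ∀ x, 0 < x → 0 < e x := fun x hx => by
    rw [← primitive_zero he]
    exact e.strictMono hx
  -- The energy of the orbit through `(2a - c, 0)`.
  set E₀ := e (2 * a - c) with hE₀
  have hE₀pos : 0 < E₀ := hepos _ (by linarith)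
  have hE₀a : E₀ = e a + γ * (a - c) := by
    have hint : e (2 * a - c) - e a = ∫ s in a..(2 * a - c), |f s| := by
      rw [he, he]
      exact intervalIntegral.integral_interval_sub_left (hcont.abs.intervalIntegrable _ _)
        (hcont.abs.intervalIntegrable _ _)
    have hval : ∫ s in a..(2 * a - c), |f s| = ∫ s in a..(2 * a - c), γ := by
      refine intervalIntegral.integral_congr fun s hs => ?_
      rw [uIcc_of_le (by linarith)] at hs
      rw [hplateau s hs, abs_neg, abs_of_pos hγ]
    rw [hval, intervalIntegral.integral_const, smul_eq_mul] at hint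
    linarith
  have hea : e a < γ * (a - c) := by
    rw [← he, one_div, inv_mul_lt_iff₀ hγ] at hintegral
    exact hintegral
  have hab : a < e.symm (E₀ / 2) := by
    rw [e.lt_symm_apply]
    linarith
  have hbm : e.symm (E₀ / 2) < 2 * a - c := by
    rw [e.symm_apply_lt]
    linarith
  have hT₀ : eighthTime f e E₀ < 1 / 2 := by
    rw [eighthTime_of_const (by linarith) he (κ := γ)]
    · rw [div_lt_iff₀ hγ]
      linarith [hii.1]
    · intro x hx
      rw [hE₀, e.symm_apply_apply] at hx
      rw [hplateau x ⟨by linarith [hx.1], hx.2⟩, abs_neg, abs_of_pos hγ]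
  constructor
  · -- An orbit that stays in `x ≥ ρ` up to the diagonal and is at least `|f ρ| / 2` high there.
    set b := max (max ρ (|f ρ| / 2)) (2 * a) with hb
    have hbρ : ρ ≤ b := (le_max_left _ _).trans (le_max_left _ _)
    have hbκ : |f ρ| / 2 ≤ b := (le_max_right _ _).trans (le_max_left _ _)
    have hba : 2 * a ≤ b := le_max_right _ _
    have hb0 : 0 < b := hρ.trans_le hbρ
    have heb := hepos b hb0
    have hsymm : e.symm (2 * e b / 2) = b := by
      rw [mul_div_cancel_left₀ _ two_ne_zero, e.symm_apply_apply]
    have hT₁ : 1 / 2 ≤ eighthTime f e (2 * e b) := by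
      rw [eighthTime_of_const (by rw [hsymm]; exact hb0.le) he (κ := |f ρ|), hsymm,
        le_div_iff₀ hκ]
      · linarith
      · intro x hx
        rw [hsymm] at hx
        rw [hρc x (hbρ.trans hx.1)]
    have hlt : E₀ < 2 * e b := by
      have : E₀ < e b := e.strictMono (by linarith)
      linarith
    obtain ⟨E, hE, hTE, hgt, -⟩ :=
      exists_eighthTime_eq hcont hneg he hE₀pos (by linarith) hT₀ hT₁
    obtain ⟨x, hx, hx0, -⟩ := exists_isKY hcont hneg hodd hK hL he hE hTE
    refine ⟨x, hx, 0, ?_⟩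
    rw [hx0, e.lt_symm_apply]
    exact hgt hlt
  · intro hpi
    obtain ⟨k, hk1, hk2⟩ := exists_between hpi
    have hf0 : f 0 = 0 := by
      have := hodd 0
      rw [neg_zero] at this
      linarith
    have hdf : HasDerivAt f (deriv f 0) 0 := (hf.differentiable one_ne_zero 0).hasDerivAt
    have hev := (hasDerivAt_iff_tendsto_slope.1 hdf).eventually (lt_mem_nhds hk2)
    rw [eventually_nhdsWithin_iff, Metric.eventually_nhds_iff] at hev
    obtain ⟨η, hη, hηk⟩ := hev
    -- The starting point of an orbit on which `|f s| ≤ -k s`.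
    set m := min (η / 2) (a / 2) with hm
    have hm0 : 0 < m := lt_min (by linarith) (by linarith)
    have hmη : m ≤ η / 2 := min_le_left _ _
    have hma : m ≤ a / 2 := min_le_right _ _
    have hfk : ∀ s ∈ Icc 0 (e.symm (e m)), |f s| ≤ -k * s := by
      intro s hs
      rw [e.symm_apply_apply] at hs
      rcases hs.1.eq_or_lt with h | h
      · simp [← h, hf0]
      · have h1 := hηk (y := s) (by rw [Real.dist_eq, sub_zero, abs_of_pos h]; linarith [hs.2])
          h.ne'
        rw [slope_def_field, hf0, sub_zero, sub_zero, lt_div_iff₀ h] at h1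
        rw [abs_of_neg (f_neg_of_pos hneg h)]
        linarith
    have hlow := eighthTime_lower hcont hneg he (hepos m hm0) hfk
    have hT₁ : 1 / 2 ≤ eighthTime f e (e m) := by
      by_contra hcon
      push Not at hcon
      have hk0 : k < 0 := hk2.trans hf'0
      nlinarith
    have hlt : e m < E₀ := e.strictMono (by linarith)
    obtain ⟨E, hE, hTE, -, hgt⟩ :=
      exists_eighthTime_eq hcont hneg he hE₀pos (hepos m hm0) hT₀ hT₁
    obtain ⟨y, hy, -, hyle⟩ := exists_isKY hcont hneg hodd hK hL he hE hTE
    refine ⟨y, hy, fun t => (hyle t).trans_lt ?_⟩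
    rw [e.symm_apply_lt]
    exact hgt hlt
end

section
/- Let M ∈ ℕ with M > 1, and let γ₁, …, γ_M be positive reals with γ_{n+1} < γ_n/4 for 1 ≤ n < M. For each n set a_n = γ_n/4, δ_n = γ_n/8, c_n = γ_n/64. Suppose f satisfies (H) and, for every n with 1 ≤ n ≤ M-1, satisfies (H'') with constants a_n, c_n, δ_n, γ_n. Then for each n with 1 ≤ n ≤ M-1, the equation x'(t) = f(x(t-1)) has an SOP solution p_n with 2a_n < max_{t∈ℝ} p_n(t) < γ_n; in particular the solutions p₁, …, p_{M-1} are pairwise distinct (no one is a time translate of another). -/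
/-!
The solutions can be written down almost explicitly. After rescaling by `γ`, take `γ = 1`; then
`f` is odd, equals `-1` on `[1/4, 31/64]`, equals `-1/8` on `[1/2, 1]`, and lies in `[-1, 0]` on
`[0, 1/2]`. Start from a history on `[-1, 0]` that falls with slope `-1` from `z` to `z - 1`,
with `z ∈ [1/4, 3/8]`. The solution reaches its minimum at time `z`, is symmetric about `z` on
`[0, 2z]` because `f` is odd, and hence is still at most `-1/2` at time `z + 1/2`. So it lies in
`(-1, -1/2]` for a full unit of time, after which it climbs with slope `1/8` until one unit after
the time `T` of its return to `-1/2`. From this point on nothing depends on `z`: at time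
`T + 9/8` its value is `-3/8 + I`, where `I = ∫₀^{1/8} f (-1/2 + s/8) ds ∈ [0, 1/8]`, and as it
has spent the last unit of time in `[-31/64, -1/4]`, it then climbs with slope `1` for one unit.
With `z = 3/8 - I` this is the negative of the initial history, so the solution is antiperiodic
with half period `h = T + 17/8`. It has one zero per half period, which gives slow oscillation,
and its maximum lies in `(1/2, 1)` (`exists_half_period`, `exists_sop_normalized`).

The solution itself comes from the method of steps (`exists_solution`), is antiperiodic by
forward uniqueness (`antiperiodic_forward`), and is extended to negative times by periodicity
(`exists_antiperiodic_extension`). For different indices the ranges `(γ n / 2, γ n)` of the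
maxima are disjoint, so the solutions are not translates of each other.
-/

open Set Filter

/-! ### Increment estimates and the method of steps -/

lemma increment_bounds {x x' : ℝ → ℝ} {u v l k : ℝ} (hx : Continuous x)
    (hd : ∀ t ∈ Ioo u v, HasDerivAt x (x' t) t)
    (hb : ∀ t ∈ Ioo u v, l ≤ x' t ∧ x' t ≤ k) {s t : ℝ} (hs : u ≤ s) (hst : s ≤ t)
    (ht : t ≤ v) : l * (t - s) ≤ x t - x s ∧ x t - x s ≤ k * (t - s) := by
  have hdiff : DifferentiableOn ℝ x (interior (Icc u v)) := by
    rw [interior_Icc]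
    exact fun r hr => (hd r hr).differentiableAt.differentiableWithinAt
  constructor
  · refine (convex_Icc u v).mul_sub_le_image_sub_of_le_deriv hx.continuousOn hdiff ?_
      s ⟨hs, hst.trans ht⟩ t ⟨hs.trans hst, ht⟩ hst
    intro r hr
    rw [interior_Icc] at hr
    rw [(hd r hr).deriv]
    exact (hb r hr).1
  · refine (convex_Icc u v).image_sub_le_mul_sub_of_deriv_le hx.continuousOn hdiff ?_
      s ⟨hs, hst.trans ht⟩ t ⟨hs.trans hst, ht⟩ hst
    intro r hr
    rw [interior_Icc] at hr
    rw [(hd r hr).deriv]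
    exact (hb r hr).2

lemma affine_of_deriv {x x' : ℝ → ℝ} {u v k : ℝ} (hx : Continuous x)
    (hd : ∀ t ∈ Ioo u v, HasDerivAt x (x' t) t)
    (hb : ∀ t ∈ Ioo u v, x' t = k) {t : ℝ} (hu : u ≤ t) (ht : t ≤ v) :
    x t = x u + k * (t - u) := by
  have := increment_bounds (l := k) (k := k) hx hd
    (fun t ht => ⟨(hb t ht).ge, (hb t ht).le⟩) le_rfl hu ht
  linarith [this.1, this.2]

/-- Iterates of the integral operator of the delay equation with history `φ`;
the `n`-th one is the solution on `(-∞, n]`. -/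
noncomputable def stepIter (g φ : ℝ → ℝ) : ℕ → ℝ → ℝ
  | 0 => fun t => φ (min t 0)
  | n + 1 => fun t => φ (min t 0) + ∫ s in (0 : ℝ)..(max t 0), g (stepIter g φ n (s - 1))

lemma stepIter_continuous {g φ : ℝ → ℝ} (hg : Continuous g) (hφ : Continuous φ) (n : ℕ) :
    Continuous (stepIter g φ n) := by
  induction n with
  | zero => exact hφ.comp (continuous_id.min continuous_const)
  | succ n ih =>
    have hc : Continuous fun s : ℝ => g (stepIter g φ n (s - 1)) :=
      hg.comp (ih.comp (continuous_id.sub continuous_const))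
    have h1 : Continuous fun b : ℝ => ∫ s in (0 : ℝ)..b, g (stepIter g φ n (s - 1)) :=
      intervalIntegral.continuous_primitive (fun a b => hc.intervalIntegrable a b) 0
    exact (hφ.comp (continuous_id.min continuous_const)).add
      (h1.comp (continuous_id.max continuous_const))

lemma stepIter_succ_eq (g φ : ℝ → ℝ) (n : ℕ) :
    ∀ t : ℝ, t ≤ n → stepIter g φ (n + 1) t = stepIter g φ n t := by
  induction n with
  | zero =>
    intro t ht
    have ht' : max t 0 = 0 := max_eq_right (by exact_mod_cast ht)
    simp [stepIter, ht']
  | succ n ih =>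
    intro t ht
    change φ (min t 0) + _ = φ (min t 0) + _
    congr 1
    refine intervalIntegral.integral_congr fun s hs => ?_
    rw [uIcc_of_le (le_max_right t 0)] at hs
    have h2 : s ≤ (n : ℝ) + 1 := by
      refine hs.2.trans (max_le (by push_cast at ht; exact ht) (by positivity))
    rw [ih (s - 1) (by linarith)]

lemma stepIter_eq_of_le (g φ : ℝ → ℝ) {m n : ℕ} (hmn : m ≤ n) {t : ℝ} (ht : t ≤ m) :
    stepIter g φ n t = stepIter g φ m t := by
  induction n, hmn using Nat.le_induction with
  | base => rfl
  | succ n hmn ih =>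
    rw [stepIter_succ_eq g φ n t (ht.trans (by exact_mod_cast hmn)), ih]

lemma exists_solution {g φ : ℝ → ℝ} (hg : Continuous g) (hφ : Continuous φ) :
    ∃ x : ℝ → ℝ, Continuous x ∧ (∀ t ≤ 0, x t = φ t) ∧
      ∀ t, 0 < t → HasDerivAt x (g (x (t - 1))) t := by
  have key : ∀ (n : ℕ) (t : ℝ), t ≤ n → stepIter g φ ⌈t⌉₊ t = stepIter g φ n t := by
    intro n t ht
    exact (stepIter_eq_of_le g φ (Nat.ceil_le.2 ht) (Nat.le_ceil t)).symm
  have near : ∀ (n : ℕ) (t : ℝ), t < n →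
      (fun s => stepIter g φ ⌈s⌉₊ s) =ᶠ[nhds t] stepIter g φ n := by
    intro n t ht
    filter_upwards [Iio_mem_nhds ht] with s hs using key n s (le_of_lt hs)
  refine ⟨fun t => stepIter g φ ⌈t⌉₊ t, ?_, ?_, ?_⟩
  · rw [continuous_iff_continuousAt]
    intro t
    obtain ⟨n, hn⟩ := exists_nat_gt t
    exact (stepIter_continuous hg hφ n).continuousAt.congr (near n t hn).symm
  · intro t ht
    simp [Nat.ceil_eq_zero.2 ht, stepIter, min_eq_left ht]
  · intro t ht
    obtain ⟨n, hn⟩ := exists_nat_gt t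
    have hn1 : t < ((n + 1 : ℕ) : ℝ) := by push_cast; linarith
    have hc : Continuous fun s : ℝ => g (stepIter g φ n (s - 1)) :=
      hg.comp ((stepIter_continuous hg hφ n).comp (continuous_id.sub continuous_const))
    have hd : HasDerivAt
        (fun r : ℝ => φ 0 + ∫ s in (0 : ℝ)..r, g (stepIter g φ n (s - 1)))
        (g (stepIter g φ n (t - 1))) t :=
      (intervalIntegral.integral_hasDerivAt_right (hc.intervalIntegrable 0 t)
        (hc.stronglyMeasurableAtFilter _ _) hc.continuousAt).const_add (φ 0)
    simp only
    rw [key n (t - 1) (by linarith)]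
    refine hd.congr_of_eventuallyEq ((near (n + 1) t hn1).trans ?_)
    filter_upwards [Ioi_mem_nhds ht] with s hs
    rw [mem_Ioi] at hs
    simp [stepIter, min_eq_right (le_of_lt hs), max_eq_left (le_of_lt hs)]

/-- If a solution agrees, after a shift by `h`, with its own negative on the history interval
`[-1,0]`, then it does so for all later times: forward uniqueness for the odd equation. -/
lemma antiperiodic_forward {g x : ℝ → ℝ} {h : ℝ} (hodd : ∀ u, g (-u) = -g u) (hh : 0 < h)
    (hx : Continuous x) (hd : ∀ t, 0 < t → HasDerivAt x (g (x (t - 1))) t)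
    (h0 : ∀ t ∈ Icc (-1 : ℝ) 0, x (t + h) = -x t) :
    ∀ t, -1 ≤ t → x (t + h) = -x t := by
  have main : ∀ n : ℕ, ∀ t : ℝ, -1 ≤ t → t ≤ n → x (t + h) = -x t := by
    intro n
    induction n with
    | zero => exact fun t h1 h2 => h0 t ⟨h1, by exact_mod_cast h2⟩
    | succ n ih =>
      intro t h1 h2
      push_cast at h2
      rcases le_or_gt t 0 with ht | ht
      · exact h0 t ⟨h1, ht⟩
      have hsum : Continuous fun s => x (s + h) + x s :=
        (hx.comp (continuous_id.add continuous_const)).add hx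
      have := affine_of_deriv (u := 0) (v := n + 1) (k := 0) hsum
        (x' := fun s => g (x (s + h - 1)) + g (x (s - 1)))
        (fun s hs => ((hd (s + h) (by linarith [hs.1])).comp_add_const s h).add (hd s hs.1))
        (fun s hs => by
          have := ih (s - 1) (by linarith [hs.1]) (by linarith [hs.2])
          have e : s + h - 1 = s - 1 + h := by ring
          rw [e, this, hodd]; ring) ht.le h2
      have h00 := h0 0 ⟨by norm_num, le_rfl⟩
      linarith
  intro t ht
  obtain ⟨n, hn⟩ := exists_nat_gt t
  exact main n t ht hn.le

/-! ### Periodic extension -/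

/-- A solution on `[-1,∞)` that is antiperiodic from time `-1` on extends to an antiperiodic
solution on the whole line. -/
lemma exists_antiperiodic_extension {g x : ℝ → ℝ} {h : ℝ} (hh : 0 < h)
    (hd : ∀ t, 0 < t → HasDerivAt x (g (x (t - 1))) t)
    (ha : ∀ t, -1 ≤ t → x (t + h) = -x t) :
    ∃ p : ℝ → ℝ, (∀ t, HasDerivAt p (g (p (t - 1))) t) ∧ (∀ t, p (t + h) = -p t) ∧
      ∀ t, -1 ≤ t → p t = x t := by
  have hper : ∀ (n : ℕ) (t : ℝ), -1 ≤ t → x (t + n * (2 * h)) = x t := by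
    intro n
    induction n with
    | zero => intro t _; simp
    | succ n ih =>
      intro t ht
      have hn : 0 ≤ (n : ℝ) * (2 * h) := by positivity
      have e : t + ((n + 1 : ℕ) : ℝ) * (2 * h) = t + n * (2 * h) + h + h := by
        push_cast; ring
      rw [e, ha _ (by linarith), ha _ (by linarith), ih t ht, neg_neg]
  have hper2 : ∀ (m n : ℕ) (t : ℝ), -1 ≤ t + m * (2 * h) → -1 ≤ t + n * (2 * h) →
      x (t + m * (2 * h)) = x (t + n * (2 * h)) := by
    intro m n t hm hn
    rcases le_total m n with hle | hle
    · obtain ⟨k, rfl⟩ := Nat.exists_eq_add_of_le hle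
      rw [← hper k _ hm]; congr 1; push_cast; ring
    · obtain ⟨k, rfl⟩ := Nat.exists_eq_add_of_le hle
      rw [← hper k _ hn]; congr 1; push_cast; ring
  have hex : ∀ t : ℝ, ∃ n : ℕ, 0 < t + n * (2 * h) := by
    intro t
    obtain ⟨n, hn⟩ := exists_nat_gt (-t / (2 * h))
    refine ⟨n, ?_⟩
    rw [div_lt_iff₀ (by positivity)] at hn
    linarith
  choose N hN using hex
  have hp : ∀ (n : ℕ) (t : ℝ), -1 ≤ t + n * (2 * h) →
      x (t + N t * (2 * h)) = x (t + n * (2 * h)) :=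
    fun n t ht => hper2 _ _ _ (by linarith [hN t]) ht
  refine ⟨fun t => x (t + N t * (2 * h)), ?_, ?_, ?_⟩
  · intro t
    have hn := hN (t - 1)
    set n := N (t - 1)
    have hd' : HasDerivAt (fun s => x (s + n * (2 * h))) (g (x (t + n * (2 * h) - 1))) t :=
      (hd _ (by linarith)).comp_add_const t _
    have e : t + n * (2 * h) - 1 = t - 1 + n * (2 * h) := by ring
    rw [e] at hd'
    refine hd'.congr_of_eventuallyEq ?_
    have : t - 1 < t := by linarith
    filter_upwards [Ioi_mem_nhds this] with s hs
    rw [mem_Ioi] at hs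
    exact hp n s (by linarith)
  · intro t
    have hn := hN t
    simp only
    rw [hp (N t) (t + h) (by linarith), ← ha _ (by linarith)]
    congr 1; ring
  · intro t ht
    have := hp 0 t (by simpa using ht)
    simpa using this

/-! ### The normalized equation -/

/-- The distinguished solution for `γ = 1`. It starts from the history `t ↦ z - 1 - t`, and
returns to the negative of this history after time `h`. -/
lemma exists_half_period {g : ℝ → ℝ} (hg : Continuous g) (hodd : ∀ u, g (-u) = -g u)
    (hneg : ∀ u, u ≠ 0 → u * g u < 0)
    (h1 : ∀ u ∈ Icc (0 : ℝ) (1 / 2), |g u| ≤ 1)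
    (h2 : ∀ u ∈ Icc (1 / 4 : ℝ) (31 / 64), g u = -1)
    (h3 : ∀ u ∈ Icc (1 / 2 : ℝ) 1, g u = -(1 / 8)) :
    ∃ (x : ℝ → ℝ) (h w : ℝ), 1 < h ∧ Continuous x ∧
      (∀ t, 0 < t → HasDerivAt x (g (x (t - 1))) t) ∧
      (∀ t ∈ Icc (-1 : ℝ) 0, x (t + h) = -x t) ∧
      (∀ t ∈ Icc (-1 : ℝ) (h - 1), |x t| < 1) ∧
      (∀ t ∈ Icc (-1 : ℝ) (h - 1), x t = 0 → t = w) ∧ x 0 < -(1 / 2) := by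
  have g0 : g 0 = 0 := by have := hodd 0; simp at this; linarith
  have gpos : ∀ u ∈ Icc (0 : ℝ) (1 / 2), -1 ≤ g u ∧ g u ≤ 0 := by
    intro u hu
    refine ⟨(abs_le.1 (h1 u hu)).1, ?_⟩
    rcases eq_or_lt_of_le hu.1 with h | h
    · rw [← h, g0]
    · have := hneg u h.ne'
      by_contra hc
      push Not at hc
      nlinarith
  have gneg : ∀ u ∈ Icc (-(1 / 2) : ℝ) 0, 0 ≤ g u ∧ g u ≤ 1 := by
    intro u hu
    have := gpos (-u) ⟨by linarith [hu.2], by linarith [hu.1]⟩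
    rw [hodd] at this
    exact ⟨by linarith [this.2], by linarith [this.1]⟩
  have g2 : ∀ u ∈ Icc (-(31 / 64) : ℝ) (-(1 / 4)), g u = 1 := by
    intro u hu
    have := h2 (-u) ⟨by linarith [hu.2], by linarith [hu.1]⟩
    rw [hodd] at this
    linarith
  have g3 : ∀ u ∈ Icc (-1 : ℝ) (-(1 / 2)), g u = 1 / 8 := by
    intro u hu
    have := h3 (-u) ⟨by linarith [hu.2], by linarith [hu.1]⟩
    rw [hodd] at this
    linarith
  -- `I` is the rise of the solution during the time at which the delayed value climbs, with
  -- speed `1/8`, through the layer `[-1/2, -31/64]`.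
  set I : ℝ := ∫ s in (0 : ℝ)..(1 / 8), g (-(1 / 2) + s / 8) with hI
  have hIc : Continuous fun s : ℝ => g (-(1 / 2) + s / 8) := by fun_prop
  have hI0 : 0 ≤ I := by
    refine intervalIntegral.integral_nonneg (by norm_num) fun s hs => ?_
    exact (gneg _ ⟨by linarith [hs.1], by linarith [hs.2]⟩).1
  have hI1 : I ≤ 1 / 8 := by
    have : I ≤ ∫ s in (0 : ℝ)..(1 / 8), (1 : ℝ) := by
      refine intervalIntegral.integral_mono_on (by norm_num) (hIc.intervalIntegrable _ _)
        (by simp) fun s hs => ?_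
      exact (gneg _ ⟨by linarith [hs.1], by linarith [hs.2]⟩).2
    simpa using this
  obtain ⟨z, hz⟩ : ∃ z : ℝ, z = 3 / 8 - I := ⟨_, rfl⟩
  have hz1 : 1 / 4 ≤ z := by linarith
  have hz2 : z ≤ 3 / 8 := by linarith
  obtain ⟨x, hx, hx0, hd⟩ := exists_solution (φ := fun t => z - 1 - t) hg (by fun_prop)
  -- On `[0, z]` the solution descends to its minimum, and stays above `-1`.
  have hdec : ∀ s t, 0 ≤ s → s ≤ t → t ≤ z →
      -1 * (t - s) ≤ x t - x s ∧ x t - x s ≤ 0 * (t - s) := by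
    intro s t hs hst ht
    refine increment_bounds hx (u := 0) (v := z) (fun t ht => hd t ht.1) ?_ hs hst ht
    intro t ht
    rw [hx0 (t - 1) (by linarith [ht.2])]
    exact gpos _ ⟨by linarith [ht.2], by linarith [ht.1]⟩
  have hinc : ∀ s t, z ≤ s → s ≤ t → t ≤ z + 1 / 2 →
      0 * (t - s) ≤ x t - x s ∧ x t - x s ≤ 1 * (t - s) := by
    intro s t hs hst ht
    refine increment_bounds hx (u := z) (v := z + 1 / 2)
      (fun t ht => hd t (by linarith [ht.1])) ?_ hs hst ht
    intro t ht
    rw [hx0 (t - 1) (by linarith [ht.2])]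
    exact gneg _ ⟨by linarith [ht.2], by linarith [ht.1]⟩
  have hx00 : x 0 = z - 1 := by simpa using hx0 0 le_rfl
  have hxz : -1 < x z := by
    -- `x t + t` is nondecreasing on `[0, z]` and has derivative `1` at `z`.
    have hdz : HasDerivAt (fun t => x t + t) 1 z := by
      have := (hd z (by linarith)).add (hasDerivAt_id z)
      rw [hx0 (z - 1) (by linarith)] at this
      have e : z - 1 - (z - 1) = 0 := by ring
      rw [e, g0, zero_add] at this
      exact this
    have hs := hasDerivAt_iff_tendsto_slope.1 hdz
    have hev := hs.eventually (lt_mem_nhds (show (0 : ℝ) < 1 by norm_num))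
    have hev' : ∀ᶠ t in nhdsWithin z (Iio z), 0 < slope (fun t => x t + t) z t :=
      (nhdsWithin_mono z (fun t (ht : t < z) => ne_of_lt ht)) hev
    have hev2 : ∀ᶠ t in nhdsWithin z (Iio z), 0 < t :=
      mem_nhdsWithin_of_mem_nhds (lt_mem_nhds (show 0 < z by linarith))
    obtain ⟨t, ht1, ht2, ht3⟩ :=
      ((Filter.Eventually.and hev' (hev2.and self_mem_nhdsWithin)).exists)
    have ht3' : t < z := ht3
    have hb := (hdec 0 t le_rfl ht2.le ht3'.le).1
    rw [slope_def_field] at ht1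
    have : (x t + t) - (x z + z) < 0 := by
      rcases div_pos_iff.1 ht1 with h | h
      · linarith [h.2]
      · exact h.1
    linarith
  -- Oddness makes `x` symmetric about the time `z` of its minimum.
  have hsym : x (2 * z) = z - 1 := by
    have hc : Continuous fun s => x (z + s) - x (z - s) := by fun_prop
    have := affine_of_deriv (u := 0) (v := z) (k := 0) hc
      (x' := fun s => g (x (z + s - 1)) - -g (x (z - s - 1)))
      (fun s hs => by
        have ha : HasDerivAt (fun s => x (z + s)) (g (x (z + s - 1))) s :=
          (hd (z + s) (by linarith [hs.1])).comp_const_add z s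
        have hb : HasDerivAt (fun s => x (z - s)) (-g (x (z - s - 1))) s :=
          (hd (z - s) (by linarith [hs.2])).comp_const_sub z s
        exact ha.sub hb)
      (fun s hs => by
        rw [hx0 _ (by linarith [hs.2]), hx0 _ (by linarith [hs.1])]
        have e1 : z - 1 - (z + s - 1) = -s := by ring
        have e2 : z - 1 - (z - s - 1) = s := by ring
        rw [e1, e2, hodd]; ring) (by linarith : (0 : ℝ) ≤ z) le_rfl
    simp only [add_zero, sub_zero, sub_self, zero_mul] at this
    rw [hx00] at this
    have e : 2 * z = z + z := by ring
    rw [e]; linarith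
  obtain ⟨V, hV⟩ : ∃ V, V = x (z + 1 / 2) := ⟨_, rfl⟩
  have hV1 : -1 < V := by
    have := (hinc z (z + 1 / 2) le_rfl (by linarith) le_rfl).1
    linarith
  have hV2 : V ≤ -(1 / 2) := by
    have := (hinc (2 * z) (z + 1 / 2) (by linarith) (by linarith) le_rfl).2
    linarith
  have hlow : ∀ t ∈ Icc (z - 1 / 2) (z + 1 / 2), -1 < x t ∧ x t ≤ -(1 / 2) := by
    intro t ht
    rcases le_or_gt t 0 with h | h
    · rw [hx0 t h]
      exact ⟨by linarith, by linarith [ht.1]⟩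
    rcases le_or_gt t z with h' | h'
    · have ha := (hdec 0 t le_rfl h.le h').2
      have hb := (hdec t z h.le h' le_rfl).2
      exact ⟨by linarith, by linarith⟩
    · have ha := (hinc z t le_rfl h'.le ht.2).1
      have hb := (hinc t (z + 1 / 2) h'.le ht.2 le_rfl).1
      exact ⟨by linarith, by linarith⟩
  -- `T` is the time at which the solution climbs back to `-1/2`.
  obtain ⟨T, hT⟩ : ∃ T : ℝ, T = z + 1 / 2 + (-(1 / 2) - V) * 8 := ⟨_, rfl⟩
  have hTσ : z + 1 / 2 ≤ T := by linarith
  have hlin : ∀ n : ℕ, ∀ t, z + 1 / 2 ≤ t → t ≤ T + 1 → t ≤ z + 1 / 2 + n →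
      x t = V + 1 / 8 * (t - (z + 1 / 2)) := by
    intro n
    induction n with
    | zero =>
      intro t ha _ hb
      have : t = z + 1 / 2 := le_antisymm (by simpa using hb) ha
      rw [this, ← hV]; ring
    | succ n ih =>
      intro t ha hb hc
      push_cast at hc
      rw [hV]
      refine affine_of_deriv hx (u := z + 1 / 2) (v := t)
        (fun s hs => hd s (by linarith [hs.1])) ?_ ha le_rfl
      intro s hs
      apply g3
      rcases le_or_gt (s - 1) (z + 1 / 2) with h | h
      · have := hlow (s - 1) ⟨by linarith [hs.1], h⟩
        exact ⟨this.1.le, this.2⟩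
      · rw [ih (s - 1) h.le (by linarith [hs.2]) (by linarith [hs.2])]
        exact ⟨by linarith, by linarith [hs.2]⟩
  have hlin' : ∀ t, z + 1 / 2 ≤ t → t ≤ T + 1 → x t = -(1 / 2) + 1 / 8 * (t - T) := by
    intro t ha hb
    obtain ⟨n, hn⟩ := exists_nat_gt (t - (z + 1 / 2))
    rw [hlin n t ha hb (by linarith)]
    linarith
  have hxT1 : x (T + 1) = -(3 / 8) := by
    rw [hlin' (T + 1) (by linarith) le_rfl]; ring
  have hlast : ∀ s t, T + 1 ≤ s → s ≤ t → t ≤ T + 9 / 8 →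
      0 * (t - s) ≤ x t - x s ∧ x t - x s ≤ 1 * (t - s) := by
    intro s t hs hst ht
    refine increment_bounds hx (u := T + 1) (v := T + 9 / 8)
      (fun t ht => hd t (by linarith [ht.1])) ?_ hs hst ht
    intro t ht
    rw [hlin' (t - 1) (by linarith [ht.1]) (by linarith [ht.2])]
    exact gneg _ ⟨by linarith [ht.1], by linarith [ht.2]⟩
  have hxE : x (T + 9 / 8) = -z := by
    have hci : Continuous fun t => g (x (t - 1)) := by fun_prop
    have ha := intervalIntegral.integral_eq_sub_of_hasDerivAt_of_le
      (show T + 1 ≤ T + 9 / 8 by linarith) hx.continuousOn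
      (fun t ht => hd t (by linarith [ht.1])) (hci.intervalIntegrable _ _)
    have hb : ∫ t in (T + 1)..(T + 9 / 8), g (x (t - 1))
        = ∫ t in (T + 1)..(T + 9 / 8), g (-(1 / 2) + (t - (T + 1)) / 8) := by
      refine intervalIntegral.integral_congr fun t ht => ?_
      rw [uIcc_of_le (by linarith)] at ht
      rw [hlin' (t - 1) (by linarith [ht.1]) (by linarith [ht.2])]
      congr 1; ring
    have hc := intervalIntegral.integral_comp_sub_right (a := T + 1) (b := T + 9 / 8)
      (fun s : ℝ => g (-(1 / 2) + s / 8)) (T + 1)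
    have e1 : T + 1 - (T + 1) = 0 := by ring
    have e2 : T + 9 / 8 - (T + 1) = 1 / 8 := by ring
    rw [e1, e2, ← hI] at hc
    rw [hb, hc] at ha
    linarith
  have hmid : ∀ t ∈ Icc (T + 1 / 8) (T + 9 / 8), -(31 / 64) ≤ x t ∧ x t ≤ -(1 / 4) := by
    intro t ht
    rcases le_or_gt t (T + 1) with h | h
    · rw [hlin' t (by linarith [ht.1]) h]
      exact ⟨by linarith [ht.1], by linarith⟩
    · have ha := (hlast (T + 1) t le_rfl h.le ht.2).1
      have hb := (hlast t (T + 9 / 8) h.le ht.2 le_rfl).1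
      exact ⟨by linarith, by linarith⟩
  have hneg' : ∀ t ∈ Icc (z - 1 / 2) (T + 9 / 8), -1 < x t ∧ x t ≤ -(1 / 4) := by
    intro t ht
    rcases le_or_gt t (z + 1 / 2) with h | h
    · have := hlow t ⟨ht.1, h⟩
      exact ⟨this.1, by linarith [this.2]⟩
    rcases le_or_gt t (T + 1 / 8) with h' | h'
    · rw [hlin' t h.le (by linarith)]
      exact ⟨by linarith, by linarith⟩
    · have := hmid t ⟨h'.le, ht.2⟩
      exact ⟨by linarith [this.1], this.2⟩
  refine ⟨x, T + 17 / 8, z - 1, by linarith, hx, hd, ?_, ?_, ?_, by linarith⟩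
  · intro t ht
    have := affine_of_deriv hx (u := T + 9 / 8) (v := T + 17 / 8) (k := 1)
      (t := t + (T + 17 / 8)) (fun s hs => hd s (by linarith [hs.1]))
      (fun s hs => g2 _ (hmid (s - 1) ⟨by linarith [hs.1], by linarith [hs.2]⟩))
      (by linarith [ht.1]) (by linarith [ht.2])
    rw [this, hxE, hx0 t ht.2]; ring
  · intro t ht
    rw [abs_lt]
    rcases le_or_gt t (z - 1 / 2) with h | h
    · rw [hx0 t (by linarith)]
      exact ⟨by linarith, by linarith [ht.1]⟩
    · have := hneg' t ⟨h.le, by linarith [ht.2]⟩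
      exact ⟨this.1, by linarith [this.2]⟩
  · intro t ht h0
    rcases le_or_gt t (z - 1 / 2) with h | h
    · rw [hx0 t (by linarith)] at h0
      linarith
    · have := hneg' t ⟨h.le, by linarith [ht.2]⟩
      linarith [this.2]

lemma exists_sop_normalized {g : ℝ → ℝ} (hg : Continuous g) (hodd : ∀ u, g (-u) = -g u)
    (hneg : ∀ u, u ≠ 0 → u * g u < 0)
    (h1 : ∀ u ∈ Icc (0 : ℝ) (1 / 2), |g u| ≤ 1)
    (h2 : ∀ u ∈ Icc (1 / 4 : ℝ) (31 / 64), g u = -1)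
    (h3 : ∀ u ∈ Icc (1 / 2 : ℝ) 1, g u = -(1 / 8)) :
    ∃ p : ℝ → ℝ, IsSOP g p ∧ (∃ t, 1 / 2 < p t) ∧ ∀ t, p t < 1 := by
  obtain ⟨x, h, w, hh, hx, hd, hanti, hbd, hzero, hx0⟩ :=
    exists_half_period hg hodd hneg h1 h2 h3
  have hh0 : 0 < h := by linarith
  obtain ⟨p, hpd, hpa, hpx⟩ := exists_antiperiodic_extension hh0 hd
    (antiperiodic_forward hodd hh0 hx hd hanti)
  have hper : Function.Periodic (fun t => |p t|) h := fun t => by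
    simp only
    rw [hpa, abs_neg]
  -- Every time is a translate by a multiple of `h` of one in the half period `[-1, h - 1)`.
  have hred : ∀ t, ∃ k : ℤ, t - k * h ∈ Icc (-1) (h - 1) ∧ |p t| = |x (t - k * h)| := by
    intro t
    obtain ⟨k, hk, -⟩ := existsUnique_sub_zsmul_mem_Ico hh0 t (-1)
    rw [zsmul_eq_mul] at hk
    refine ⟨k, ⟨hk.1, by linarith [hk.2]⟩, ?_⟩
    have := hper.sub_zsmul_eq (x := t) k
    rw [zsmul_eq_mul] at this
    rw [← this, hpx _ hk.1]
  have hp0 : p 0 < -(1 / 2) := by rw [hpx 0 (by norm_num)]; exact hx0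
  have hph : p (0 + h) = -p 0 := hpa 0
  refine ⟨p, ⟨hpd, ⟨2 * h, by linarith, fun t => ?_⟩, ⟨0 + h, 0, ?_⟩, ?_⟩, ⟨0 + h, ?_⟩, ?_⟩
  · rw [two_mul, ← add_assoc, hpa, hpa, neg_neg]
  · intro he
    linarith
  · intro u v hu hv huv
    obtain ⟨k, hk, hk'⟩ := hred u
    obtain ⟨l, hl, hl'⟩ := hred v
    rw [hu, abs_zero] at hk'
    rw [hv, abs_zero] at hl'
    have ek := hzero _ hk (abs_eq_zero.1 hk'.symm)
    have el := hzero _ hl (abs_eq_zero.1 hl'.symm)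
    have huv' : u - v = ((k - l : ℤ) : ℝ) * h := by push_cast; linarith
    have hkl : k - l ≠ 0 := by
      intro h0
      rw [h0] at huv'
      apply huv
      simp at huv'
      linarith
    have habs : (1 : ℝ) ≤ |((k - l : ℤ) : ℝ)| := by
      exact_mod_cast Int.one_le_abs hkl
    rw [huv', abs_mul, abs_of_pos hh0]
    nlinarith
  · linarith
  · intro t
    obtain ⟨k, hk, hk'⟩ := hred t
    have := hbd _ hk
    rw [← hk'] at this
    exact (abs_lt.1 this).2

lemma exists_sop {f : ℝ → ℝ} {γ : ℝ} (hγ : 0 < γ) (hH : HypH f)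
    (hH'' : HypH'' f (γ / 4) (γ / 64) (γ / 8) γ) :
    ∃ p : ℝ → ℝ, IsSOP f p ∧ (∃ t, 2 * (γ / 4) < p t) ∧ ∀ t, p t < γ := by
  obtain ⟨hc, hneg, -, -⟩ := hH
  obtain ⟨hodd, hb, hp1, hp2⟩ := hH''
  obtain ⟨q, ⟨hqd, ⟨T, hT, hqT⟩, ⟨t, s, hts⟩, hqz⟩, ⟨t', ht'⟩, hq1⟩ :=
    exists_sop_normalized (g := fun u => f (γ * u) / γ) (by fun_prop)
      (fun u => by rw [mul_neg, hodd, neg_div])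
      (fun u hu => by
        have := hneg (γ * u) (mul_ne_zero hγ.ne' hu)
        have e : u * (f (γ * u) / γ) = (γ * u * f (γ * u)) / γ ^ 2 := by
          field_simp
        rw [e]
        exact div_neg_of_neg_of_pos this (by positivity))
      (fun u hu => by
        rw [abs_div, abs_of_pos hγ, div_le_one hγ]
        exact hb _ ⟨by nlinarith [hu.1], by nlinarith [hu.2]⟩)
      (fun u hu => by
        rw [hp1 _ ⟨by nlinarith [hu.1], by nlinarith [hu.2]⟩]
        field_simp)
      (fun u hu => by
        rw [hp2 _ ⟨by nlinarith [hu.1], by nlinarith [hu.2]⟩]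
        field_simp)
  refine ⟨fun t => γ * q t, ⟨fun t => ?_, ⟨T, hT, fun t => ?_⟩, ⟨t, s, ?_⟩, ?_⟩, ⟨t', ?_⟩, ?_⟩
  · have := (hqd t).const_mul γ
    rwa [mul_div_cancel₀ _ hγ.ne'] at this
  · simp only [hqT]
  · exact fun h => hts (mul_left_cancel₀ hγ.ne' h)
  · intro u v hu hv
    exact hqz u v ((mul_eq_zero.1 hu).resolve_left hγ.ne')
      ((mul_eq_zero.1 hv).resolve_left hγ.ne')
  · simp only
    nlinarith
  · intro t
    simp only
    nlinarith [hq1 t]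

theorem statement_18 (M : ℕ) (hM : 1 < M) (γ : ℕ → ℝ)
    (hγpos : ∀ n : ℕ, 1 ≤ n → n ≤ M → 0 < γ n)
    (hγdec : ∀ n : ℕ, 1 ≤ n → n < M → γ (n + 1) < γ n / 4)
    (f : ℝ → ℝ) (hH : HypH f)
    (hH'' : ∀ n : ℕ, 1 ≤ n → n ≤ M - 1 →
      HypH'' f (γ n / 4) (γ n / 64) (γ n / 8) (γ n)) :
    ∃ p : ℕ → ℝ → ℝ,
      (∀ n : ℕ, 1 ≤ n → n ≤ M - 1 → IsSOP f (p n) ∧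
        (∃ t : ℝ, 2 * (γ n / 4) < p n t) ∧ ∀ t : ℝ, p n t < γ n) ∧
      ∀ m n : ℕ, 1 ≤ m → m ≤ M - 1 → 1 ≤ n → n ≤ M - 1 → m ≠ n →
        ∀ s : ℝ, ∃ t : ℝ, p n t ≠ p m (t + s) := by
  have hpos : ∀ n, 1 ≤ n → n ≤ M - 1 → 0 < γ n := fun n h1 h2 => hγpos n h1 (by omega)
  have hex : ∀ n : ℕ, ∃ q : ℝ → ℝ, 1 ≤ n → n ≤ M - 1 → IsSOP f q ∧
      (∃ t : ℝ, 2 * (γ n / 4) < q t) ∧ ∀ t : ℝ, q t < γ n := by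
    intro n
    by_cases h : 1 ≤ n ∧ n ≤ M - 1
    · obtain ⟨q, hq⟩ := exists_sop (hpos n h.1 h.2) hH (hH'' n h.1 h.2)
      exact ⟨q, fun _ _ => hq⟩
    · exact ⟨0, fun h1 h2 => absurd ⟨h1, h2⟩ h⟩
  choose p hp using hex
  have hlt : ∀ m n, 1 ≤ m → m < n → n ≤ M - 1 → γ n < γ m / 4 := by
    intro m n hm hmn
    induction n, hmn using Nat.le_induction with
    | base => exact fun hn => hγdec m hm (by omega)
    | succ n hmn ih =>
      intro hn
      have hn1 := hγdec n (by omega) (by omega)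
      have hn2 := ih (by omega)
      have hn3 := hpos n (by omega) (by omega)
      linarith
  refine ⟨p, hp, ?_⟩
  intro m n hm hm' hn hn' hne s
  obtain ⟨-, ⟨tm, htm⟩, hmb⟩ := hp m hm hm'
  obtain ⟨-, ⟨tn, htn⟩, hnb⟩ := hp n hn hn'
  have hmpos := hpos m hm hm'
  have hnpos := hpos n hn hn'
  rcases lt_or_gt_of_ne hne with h | h
  · refine ⟨tm - s, fun he => ?_⟩
    rw [sub_add_cancel] at he
    linarith [hlt m n hm h hn', hnb (tm - s)]
  · refine ⟨tn, fun he => ?_⟩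
    linarith [hlt n m hn h hm', hmb (tn + s)]
end
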